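/- (Correctness of the coset-state scheme for copy-protecting point functions, Section 4.1.) Let n ≥ 1, let σ, τ_s, τ_x be permutations of {1,…,n} with τ_s ≠ e, τ_x ≠ e, τ_s² = e, and τ_x² = e. In the Hilbert space ℂ[S_n] = EuclideanSpace over ℂ indexed by the permutations of {1,…,n}, with orthonormal basis {e_π}, let ψ = (e_σ + e_{σ·τ_s})/√2, and let R be the (unitary) right-multiplication operator determined by R e_π = e_{π·τ_x}. Then the Hadamard-test acceptance probability ‖(ψ + Rψ)/2‖² equals 1 if τ_x = τ_s, and equals 1/2 if τ_x ≠ τ_s. (Equivalently: the customer's verification procedure yields outcome |0⟩ with certainty when x = s, and yields outcome |1⟩ with probability 1/2 when x ≠ s.) -/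

import Mathlib

/-!
Since `τ_s` is an involution, `R` swaps the two basis vectors of `ψ` when `τ_x = τ_s`, so it fixes
`ψ` and the test accepts with certainty. When `1 ≠ τ_x ≠ τ_s`, the supports `{σ, σ τ_s}` and
`{σ τ_x, σ τ_s τ_x}` are disjoint, so `ψ` and `Rψ` are orthogonal unit vectors and Pythagoras gives
`‖(ψ + Rψ)/2‖² = (1 + 1)/4`.
-/

open scoped InnerProductSpace

section

variable {𝕜 E : Type*} [RCLike 𝕜] [NormedAddCommGroup E] [InnerProductSpace 𝕜 E]

section HadamardTest

variable {U : E →ₗ[𝕜] E} {ψ : E}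

/-- The probability that the Hadamard test of `U` on the state `ψ` accepts (outcome `|0⟩`), that is,
the squared norm of the `|0⟩` component of the final state. -/
noncomputable def hadamardAcceptProb (U : E →ₗ[𝕜] E) (ψ : E) : ℝ :=
  ‖(2 : 𝕜)⁻¹ • (ψ + U ψ)‖ ^ 2

theorem hadamardAcceptProb_eq_norm_add_sq_div (U : E →ₗ[𝕜] E) (ψ : E) :
    hadamardAcceptProb U ψ = ‖ψ + U ψ‖ ^ 2 / 4 := by
  rw [hadamardAcceptProb, norm_smul, norm_inv, RCLike.norm_ofNat]
  ring

theorem hadamardAcceptProb_of_apply_eq_self (h : U ψ = ψ) :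
    hadamardAcceptProb U ψ = ‖ψ‖ ^ 2 := by
  rw [hadamardAcceptProb, h, ← two_smul 𝕜 ψ, inv_smul_smul₀ two_ne_zero]

theorem hadamardAcceptProb_of_inner_eq_zero (h : ⟪ψ, U ψ⟫_𝕜 = 0) :
    hadamardAcceptProb U ψ = (‖ψ‖ ^ 2 + ‖U ψ‖ ^ 2) / 4 := by
  rw [hadamardAcceptProb_eq_norm_add_sq_div, @norm_add_sq 𝕜, h, map_zero, mul_zero, add_zero]

end HadamardTest

section PairState

variable {ι : Type*} {e : ι → E} {a b c d : ι}

variable (𝕜) in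
/-- The uniform superposition `(e a + e b) / √2`. The coset state of `σ` and an involution `τ` is
`pairState 𝕜 e σ (σ * τ)`. -/
noncomputable def pairState (e : ι → E) (a b : ι) : E :=
  ((√2 : ℝ) : 𝕜)⁻¹ • (e a + e b)

theorem pairState_comm (e : ι → E) (a b : ι) : pairState 𝕜 e a b = pairState 𝕜 e b a := by
  rw [pairState, pairState, add_comm]

theorem norm_pairState (he : Orthonormal 𝕜 e) (hab : a ≠ b) : ‖pairState 𝕜 e a b‖ = 1 := by
  have norm_sum_sq : ‖e a + e b‖ ^ 2 = 2 := by
    rw [@norm_add_sq 𝕜, he.inner_eq_zero hab, he.norm_eq_one, he.norm_eq_one, map_zero]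
    norm_num
  have norm_sum : ‖e a + e b‖ = √2 := by
    rw [← norm_sum_sq, Real.sqrt_sq (norm_nonneg _)]
  rw [pairState, norm_smul, norm_inv, RCLike.norm_ofReal, abs_of_nonneg (Real.sqrt_nonneg 2),
    norm_sum, inv_mul_cancel₀ (by positivity)]

theorem inner_pairState_eq_zero (he : Orthonormal 𝕜 e) (hac : a ≠ c) (had : a ≠ d) (hbc : b ≠ c)
    (hbd : b ≠ d) : ⟪pairState 𝕜 e a b, pairState 𝕜 e c d⟫_𝕜 = 0 := by
  simp only [pairState, inner_smul_left, inner_smul_right, inner_add_left, inner_add_right,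
    he.inner_eq_zero hac, he.inner_eq_zero had, he.inner_eq_zero hbc, he.inner_eq_zero hbd,
    add_zero, mul_zero]

end PairState

section RightMultiplication

variable {G : Type*} [Group G] {e : G → E} {R : E →ₗ[𝕜] E} {τs τx : G}

theorem map_pairState_of_map_mul_right (hR : ∀ g, R (e g) = e (g * τx)) (g h : G) :
    R (pairState 𝕜 e g h) = pairState 𝕜 e (g * τx) (h * τx) := by
  simp only [pairState, map_smul, map_add, hR]

theorem map_pairState_mul_right_eq_self (hR : ∀ g, R (e g) = e (g * τs)) (hτs2 : τs ^ 2 = 1)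
    (σ : G) : R (pairState 𝕜 e σ (σ * τs)) = pairState 𝕜 e σ (σ * τs) := by
  rw [map_pairState_of_map_mul_right hR, mul_assoc, ← pow_two, hτs2, mul_one, pairState_comm]

theorem inner_pairState_map_mul_right_eq_zero (he : Orthonormal 𝕜 e)
    (hR : ∀ g, R (e g) = e (g * τx)) (hτs2 : τs ^ 2 = 1) (hτx : τx ≠ 1) (hne : τx ≠ τs) (σ : G) :
    ⟪pairState 𝕜 e σ (σ * τs), R (pairState 𝕜 e σ (σ * τs))⟫_𝕜 = 0 := by
  have hmul : τs * τx ≠ 1 := fun h ↦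
    hne (mul_left_cancel (h.trans (hτs2.symm.trans (pow_two τs))))
  rw [map_pairState_of_map_mul_right hR]
  apply inner_pairState_eq_zero he
  · simpa using hτx
  · simpa [mul_assoc] using hmul
  · simpa using hne.symm
  · simpa using hτx

theorem coset_state_verification_general [DecidableEq G] (he : Orthonormal 𝕜 e)
    (hR : ∀ g, R (e g) = e (g * τx)) (hτs : τs ≠ 1) (hτx : τx ≠ 1) (hτs2 : τs ^ 2 = 1) (σ : G) :
    hadamardAcceptProb R (pairState 𝕜 e σ (σ * τs)) = if τx = τs then 1 else 1 / 2 := by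
  have norm_ψ : ‖pairState 𝕜 e σ (σ * τs)‖ = 1 := norm_pairState he (by simpa using hτs)
  split_ifs with h
  · subst h
    rw [hadamardAcceptProb_of_apply_eq_self (map_pairState_mul_right_eq_self hR hτs2 σ), norm_ψ,
      one_pow]
  · have norm_Rψ : ‖R (pairState 𝕜 e σ (σ * τs))‖ = 1 := by
      rw [map_pairState_of_map_mul_right hR]
      exact norm_pairState he (by simpa using hτs)
    rw [hadamardAcceptProb_of_inner_eq_zero
      (inner_pairState_map_mul_right_eq_zero he hR hτs2 hτx h σ), norm_ψ, norm_Rψ]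
    norm_num

end RightMultiplication

end

section RightMulIsometryEquiv

variable (𝕜 : Type*) [RCLike 𝕜] {G : Type*} [Group G] [Fintype G]

/-- The right-multiplication unitary `R_τ`, which sends the basis vector at `π` to the basis vector
at `π * τ`; on functions it is precomposition with right multiplication by `τ⁻¹`. -/
noncomputable def rightMulIsometryEquiv (τ : G) :
    EuclideanSpace 𝕜 G ≃ₗᵢ[𝕜] EuclideanSpace 𝕜 G :=
  LinearIsometryEquiv.piLpCongrLeft 2 𝕜 𝕜 (Equiv.mulRight τ)

variable {𝕜}

theorem rightMulIsometryEquiv_apply (τ : G) (ψ : EuclideanSpace 𝕜 G) (π : G) :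
    rightMulIsometryEquiv 𝕜 τ ψ π = ψ (π * τ⁻¹) :=
  rfl

theorem rightMulIsometryEquiv_single [DecidableEq G] (τ π : G) (z : 𝕜) :
    rightMulIsometryEquiv 𝕜 τ (EuclideanSpace.single π z) = EuclideanSpace.single (π * τ) z :=
  LinearIsometryEquiv.piLpCongrLeft_single _ π z

end RightMulIsometryEquiv

/-- Correctness of the coset-state scheme for copy-protecting point functions:
with `ψ = (e_σ + e_{σ·τ_s})/√2` and `R` the right-multiplication unitary
`R e_π = e_{π·τ_x}`, the Hadamard-test acceptance probability `‖(ψ + Rψ)/2‖²`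
equals `1` if `τ_x = τ_s` and `1/2` otherwise. -/
theorem coset_state_verification {n : ℕ} (hn : 1 ≤ n)
    (σ τs τx : Equiv.Perm (Fin n))
    (hτs : τs ≠ 1) (hτx : τx ≠ 1)
    (hτs2 : τs ^ 2 = 1) (hτx2 : τx ^ 2 = 1) :
    ∀ (ψ Rψ : EuclideanSpace ℂ (Equiv.Perm (Fin n))),
      ψ = ((Real.sqrt 2 : ℂ))⁻¹ •
          (EuclideanSpace.single σ 1 + EuclideanSpace.single (σ * τs) 1) →
      (∀ π : Equiv.Perm (Fin n), Rψ π = ψ (π * τx⁻¹)) →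
      ‖(2 : ℂ)⁻¹ • (ψ + Rψ)‖ ^ 2 = if τx = τs then 1 else 1 / 2 := by
  rintro ψ Rψ rfl hRψ
  obtain rfl : Rψ = rightMulIsometryEquiv ℂ τx _ :=
    PiLp.ext fun π ↦ (hRψ π).trans (rightMulIsometryEquiv_apply τx _ π).symm
  exact coset_state_verification_general (R := (rightMulIsometryEquiv ℂ τx).toLinearMap)
    EuclideanSpace.orthonormal_single (fun π ↦ rightMulIsometryEquiv_single τx π 1) hτs hτx hτs2 σ
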